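/- If S is an infinite compact subset of ℂ and p ∈ S, then the Banach space I_p(S) = {A ∈ C(S) : A(p) = 0} (with the supremum norm) does not have the fixed point property for nonexpansive mappings: there exist a nonempty bounded closed convex subset K of I_p(S) and a nonexpansive map M : K → K with no fixed point. -/

import Mathlib

/-- For `p ∈ S`, the subspace of `C(S, ℂ)` of functions vanishing at `p`,
as a `ℂ`-submodule. -/
noncomputable def vanishingIdeal (S : Set ℂ) [CompactSpace S] (p : S) : Submodule ℂ C(S, ℂ) where
  carrier := {A | A p = 0}
  add_mem' := by
    intro a b ha hb
    simp only [Set.mem_setOf_eq, ContinuousMap.add_apply] at *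
    rw [ha, hb, add_zero]
  zero_mem' := by simp
  smul_mem' := by
    intro c a ha
    simp only [Set.mem_setOf_eq, ContinuousMap.smul_apply] at *
    rw [ha, smul_zero]

/-- The map `f ↦ min w (Re f + h)` on the functions vanishing at `p`; it takes values there
when `min (w p) (h p) = 0`. -/
noncomputable def truncatedShift {S : Set ℂ} [CompactSpace S] {p : S} (w h : C(S, ℝ))
    (hp : min (w p) (h p) = 0) (f : vanishingIdeal S p) : vanishingIdeal S p :=
  ⟨⟨fun s => ((min (w s) ((f.1 s).re + h s) : ℝ) : ℂ), by fun_prop⟩, by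
    have hf : f.1 p = 0 := f.2
    change ((min (w p) ((f.1 p).re + h p) : ℝ) : ℂ) = 0
    simp [hf, hp]⟩

theorem truncatedShift_apply {S : Set ℂ} [CompactSpace S] {p : S} (w h : C(S, ℝ))
    (hp : min (w p) (h p) = 0) (f : vanishingIdeal S p) (s : S) :
    (truncatedShift w h hp f).1 s = ((min (w s) ((f.1 s).re + h s) : ℝ) : ℂ) := rfl

theorem norm_truncatedShift_sub_le {S : Set ℂ} [CompactSpace S] {p : S} (w h : C(S, ℝ))
    (hp : min (w p) (h p) = 0) (f g : vanishingIdeal S p) :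
    ‖truncatedShift w h hp f - truncatedShift w h hp g‖ ≤ ‖f - g‖ := by
  refine (ContinuousMap.norm_le ((truncatedShift w h hp f).1 -
    (truncatedShift w h hp g).1) (norm_nonneg (f - g))).2 fun s => ?_
  calc ‖(truncatedShift w h hp f).1 s - (truncatedShift w h hp g).1 s‖
      = |min (w s) ((f.1 s).re + h s) - min (w s) ((g.1 s).re + h s)| := by
        rw [truncatedShift_apply, truncatedShift_apply, ← Complex.ofReal_sub,
          Complex.norm_real, Real.norm_eq_abs]
    _ ≤ |(f.1 s - g.1 s).re| := by
        refine (abs_min_sub_min_le_max _ _ _ _).trans ?_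
        simp
    _ ≤ ‖(f.1 - g.1) s‖ := Complex.abs_re_le_norm _
    _ ≤ ‖f.1 - g.1‖ := ContinuousMap.norm_coe_le_norm _ s

/-- The functions vanishing at `p` and `q` that take real values between `0` and `w`. -/
def orderInterval {S : Set ℂ} [CompactSpace S] {p : S} (q : S) (w : C(S, ℝ)) :
    Set (vanishingIdeal S p) :=
  {f | f.1 q = 0 ∧ ∀ s, (f.1 s).im = 0 ∧ 0 ≤ (f.1 s).re ∧ (f.1 s).re ≤ w s}

theorem isBounded_orderInterval {S : Set ℂ} [CompactSpace S] {p : S} (q : S) (w : C(S, ℝ)) :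
    Bornology.IsBounded (orderInterval (p := p) q w) := by
  refine isBounded_iff_forall_norm_le.2 ⟨‖w‖, fun f hf => ?_⟩
  refine (ContinuousMap.norm_le f.1 (norm_nonneg w)).2 fun s => ?_
  obtain ⟨him, h0, h1⟩ := hf.2 s
  rw [← Complex.abs_re_eq_norm.2 him, abs_of_nonneg h0]
  exact h1.trans ((le_abs_self _).trans (w.norm_coe_le_norm s))

theorem isClosed_orderInterval {S : Set ℂ} [CompactSpace S] {p : S} (q : S) (w : C(S, ℝ)) :
    IsClosed (orderInterval (p := p) q w) := by
  have heval (s : S) : Continuous fun f : vanishingIdeal S p => f.1 s :=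
    (continuous_eval_const s).comp continuous_subtype_val
  have hre (s : S) := Complex.continuous_re.comp (heval s)
  have him (s : S) := Complex.continuous_im.comp (heval s)
  simp only [orderInterval, Set.ofPred_and, Set.ofPred_forall]
  exact (isClosed_eq (heval q) continuous_const).inter <| isClosed_iInter fun s =>
    (isClosed_eq (him s) continuous_const).inter <|
      (isClosed_le continuous_const (hre s)).inter (isClosed_le (hre s) continuous_const)

theorem orderInterval_combo_mem {S : Set ℂ} [CompactSpace S] {p q : S} {w : C(S, ℝ)}
    {f g : vanishingIdeal S p} (hf : f ∈ orderInterval q w) (hg : g ∈ orderInterval q w)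
    {t : ℝ} (ht0 : 0 ≤ t) (ht1 : t ≤ 1) :
    ((1 - t : ℝ) : ℂ) • f + ((t : ℝ) : ℂ) • g ∈ orderInterval q w := by
  have happly (s : S) : (((1 - t : ℝ) : ℂ) • f + ((t : ℝ) : ℂ) • g).1 s =
      ((1 - t : ℝ) : ℂ) * f.1 s + ((t : ℝ) : ℂ) * g.1 s := rfl
  refine ⟨by rw [happly, hf.1, hg.1]; simp, fun s => ?_⟩
  obtain ⟨hfi, hf0, hf1⟩ := hf.2 s
  obtain ⟨hgi, hg0, hg1⟩ := hg.2 s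
  have hs : 0 ≤ 1 - t := sub_nonneg.2 ht1
  rw [happly, Complex.add_im, Complex.add_re, Complex.im_ofReal_mul, Complex.im_ofReal_mul,
    Complex.re_ofReal_mul, Complex.re_ofReal_mul, hfi, hgi]
  refine ⟨by simp, by positivity, ?_⟩
  nlinarith [mul_le_mul_of_nonneg_left hf1 hs, mul_le_mul_of_nonneg_left hg1 ht0]

theorem mapsTo_truncatedShift {S : Set ℂ} [CompactSpace S] {p q : S} {w h : C(S, ℝ)}
    (hp : min (w p) (h p) = 0) (hw : 0 ≤ w) (hh : 0 ≤ h) (hq : h q = 0) :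
    Set.MapsTo (truncatedShift w h hp) (orderInterval q w) (orderInterval q w) := by
  intro f hf
  refine ⟨?_, fun s => ?_⟩
  · have hwq : 0 ≤ w q := hw q
    rw [truncatedShift_apply, hf.1, hq]
    simp [hwq]
  · rw [truncatedShift_apply, Complex.ofReal_im, Complex.ofReal_re]
    exact ⟨rfl, le_min (hw s) (add_nonneg (hf.2 s).2.1 (hh s)), min_le_left _ _⟩

/-- A fixed point would agree with `w` off the accumulation point `q`, hence also at `q`. -/
theorem truncatedShift_ne_self {S : Set ℂ} [CompactSpace S] {p q : S}
    [(nhdsWithin q {q}ᶜ).NeBot] {w h : C(S, ℝ)} (hp : min (w p) (h p) = 0)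
    (hpos : ∀ s, s ≠ q → 0 < h s) (hwq : w q ≠ 0) {f : vanishingIdeal S p}
    (hf : f ∈ orderInterval q w) : truncatedShift w h hp f ≠ f := by
  intro hfix
  have heq (s : S) (hs : s ≠ q) : (f.1 s).re = w s := by
    have hval : min (w s) ((f.1 s).re + h s) = (f.1 s).re := by
      have := congrArg (fun k : vanishingIdeal S p => (k.1 s).re) hfix
      simpa only [truncatedShift_apply, Complex.ofReal_re] using this
    have := hpos s hs
    rcases min_choice (w s) ((f.1 s).re + h s) with hm | hm <;> linarith
  have hcont : Continuous fun s => (f.1 s).re := by fun_prop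
  have hlim : Filter.Tendsto w (nhdsWithin q {q}ᶜ) (nhds (f.1 q).re) :=
    (hcont.continuousAt.tendsto.mono_left nhdsWithin_le_nhds).congr' <| by
      filter_upwards [self_mem_nhdsWithin] with s hs using heq s hs
  have := tendsto_nhds_unique hlim
    (w.continuous.continuousAt.tendsto.mono_left nhdsWithin_le_nhds)
  rw [hf.1] at this
  exact hwq this.symm

/-- If `S` is an infinite compact subset of `ℂ` and `p ∈ S`, then the Banach space
`I_p(S) = {A ∈ C(S, ℂ) : A(p) = 0}` (with the supremum norm) fails the fixed point
property for nonexpansive mappings: there is a nonempty bounded closed convex subset `K`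
and a nonexpansive self-map of `K` with no fixed point. -/
theorem vanishingIdeal_not_hasFPP
    (S : Set ℂ) [CompactSpace S] (hS : S.Infinite) (p : S) :
    ∃ K : Set (vanishingIdeal S p), K.Nonempty ∧ Bornology.IsBounded K ∧ IsClosed K ∧
      (∀ x ∈ K, ∀ y ∈ K, ∀ t : ℝ, 0 ≤ t → t ≤ 1 →
        ((1 - t : ℝ) : ℂ) • x + ((t : ℝ) : ℂ) • y ∈ K) ∧
      ∃ M : vanishingIdeal S p → vanishingIdeal S p, Set.MapsTo M K K ∧
        (∀ x ∈ K, ∀ y ∈ K, ‖M x - M y‖ ≤ ‖x - y‖) ∧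
        ∀ x ∈ K, M x ≠ x := by
  have : Infinite S := hS.to_subtype
  obtain ⟨q, hq⟩ := exists_nhds_ne_neBot S
  obtain ⟨w, hw, hwq, hp⟩ : ∃ w : C(S, ℝ), 0 ≤ w ∧ w q ≠ 0 ∧ min (w p) (dist p q) = 0 := by
    by_cases hpq : p = q
    · exact ⟨1, fun _ => zero_le_one, one_ne_zero, by simp [hpq]⟩
    · refine ⟨⟨fun s => dist s p, by fun_prop⟩, fun _ => dist_nonneg, ?_, ?_⟩
      · exact dist_ne_zero.2 (Ne.symm hpq)
      · change min (dist p p) (dist p q) = 0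
        rw [dist_self, min_eq_left dist_nonneg]
  let h : C(S, ℝ) := ⟨fun s => dist s q, by fun_prop⟩
  refine ⟨orderInterval q w, ⟨0, rfl, fun s => ⟨rfl, le_rfl, hw s⟩⟩,
    isBounded_orderInterval q w, isClosed_orderInterval q w,
    fun f hf g hg t ht0 ht1 => orderInterval_combo_mem hf hg ht0 ht1,
    truncatedShift w h hp, mapsTo_truncatedShift hp hw (fun _ => dist_nonneg) (dist_self q),
    fun f _ g _ => norm_truncatedShift_sub_le w h hp f g,
    fun f hf => truncatedShift_ne_self hp (fun s hs => dist_pos.2 hs) hwq hf⟩
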